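/- Let μ be a probability measure on (0,∞) with distribution function F such that L(t) := 1 − F(t) is positive for all t and slowly varying at infinity. Fix 0 < a < b < ∞, let (λ_i)_{i≥1} be any sequence in [a,b], and let μ_i be the pushforward of μ under x ↦ x/λ_i. Then the scaled renewal function U_Λ(t) = 1 + Σ_{n=1}^∞ (μ_1 * μ_2 * ⋯ * μ_n)([0,t]) is finite for every t, and U_Λ(t)·(1 − F(t)) → 1 as t → ∞. -/

import Mathlib

open MeasureTheory ProbabilityTheory Filter Set Topology ENNReal

/-- Partial convolutions `μ_1 * μ_2 * ⋯ * μ_n` of a sequence of measures,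
with the empty product `δ_0`. -/
noncomputable def partialConv (μs : ℕ → MeasureTheory.Measure ℝ) :
    ℕ → MeasureTheory.Measure ℝ
  | 0 => MeasureTheory.Measure.dirac 0
  | n + 1 => MeasureTheory.Measure.conv (partialConv μs n) (μs (n + 1))

/-!
Let `S_n` be the partial sums of independent `X_i ≥ 0` with laws `μ_i`. Since
`P(S_n ≤ t) ≤ ∏ P(X_i ≤ t)`, a geometric series gives `U(t) ≤ 1 / inf_i P(X_i > t)`.

For the lower bound, integrating `1_{[0, t]}(x) ≥ e^{-(r + s)x} - e^{-rt} e^{-sx}` and summing over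
`n` bounds `U(t)` below by a difference of two geometric series in the Laplace transforms `φ_i` of
the `μ_i`. Tails give `1 - φ_i(s) ≥ (1 - e^{-st}) P(X_i > t)`. In the other direction
`1 - φ_i(s) ≤ P(X_i > u) + s E[X_i; X_i ≤ u]`, and slow variation makes the truncated moment
`O(u P(X_i > u))`. With `r = s = K / t` and `u = t / K ^ 2`, letting `t → ∞` and then `K → ∞`
yields the matching constant.

The rescaled copies of a single law have tails between `1 - F(b t)` and `1 - F(a t)`, both
asymptotically equivalent to `1 - F(t)`.
-/

/-- The renewal function `U(t) = 1 + Σ_{n ≥ 1} (μ_1 * ⋯ * μ_n)([0, t])` of a sequence of measures,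
with values in `[0, ∞]`. The measure `μs 0` does not enter. -/
noncomputable def renewalFunction (μs : ℕ → Measure ℝ) (t : ℝ) : ℝ≥0∞ :=
  1 + ∑' n : ℕ, partialConv μs (n + 1) (Icc 0 t)

/-- The Laplace transform `s ↦ ∫ e^{-sx} dμ(x)` of a measure on the line, as a lower integral, so
that multiplicativity under convolution needs no integrability. -/
noncomputable def laplaceTransform (μ : Measure ℝ) (s : ℝ) : ℝ≥0∞ :=
  ∫⁻ x, ENNReal.ofReal (Real.exp (-(s * x))) ∂μ

section Convolution

variable {μ ν : Measure ℝ} {μs : ℕ → Measure ℝ}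

lemma ae_nonneg_conv [SFinite ν] (hμ : ∀ᵐ x ∂μ, 0 ≤ x) (hν : ∀ᵐ x ∂ν, 0 ≤ x) :
    ∀ᵐ x ∂(μ.conv ν), 0 ≤ x := by
  refine (ae_map_iff (by fun_prop) measurableSet_Ici).2 ?_
  filter_upwards [Measure.quasiMeasurePreserving_fst.ae hμ,
    Measure.quasiMeasurePreserving_snd.ae hν] with x hx hy using add_nonneg hx hy

lemma conv_Iic_le_mul [SFinite ν] (hμ : ∀ᵐ x ∂μ, 0 ≤ x) (hν : ∀ᵐ x ∂ν, 0 ≤ x) (t : ℝ) :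
    μ.conv ν (Iic t) ≤ μ (Iic t) * ν (Iic t) := by
  rw [Measure.conv, Measure.map_apply (by fun_prop) measurableSet_Iic, ← Measure.prod_prod]
  refine measure_mono_ae ?_
  filter_upwards [Measure.quasiMeasurePreserving_fst.ae hμ,
    Measure.quasiMeasurePreserving_snd.ae hν] with x hx hy hxy
  exact ⟨(le_add_of_nonneg_right hy).trans hxy, (le_add_of_nonneg_left hx).trans hxy⟩

lemma laplaceTransform_conv [SFinite ν] (s : ℝ) :
    laplaceTransform (μ.conv ν) s = laplaceTransform μ s * laplaceTransform ν s := by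
  have hexp (x y : ℝ) : ENNReal.ofReal (Real.exp (-(s * (x + y)))) =
      ENNReal.ofReal (Real.exp (-(s * x))) * ENNReal.ofReal (Real.exp (-(s * y))) := by
    rw [← ENNReal.ofReal_mul (Real.exp_nonneg _), ← Real.exp_add]
    ring_nf
  simp only [laplaceTransform]
  rw [Measure.lintegral_conv (by fun_prop)]
  simp only [hexp]
  rw [lintegral_lintegral_mul (by fun_prop) (by fun_prop)]

instance sFinite_partialConv [∀ i, SFinite (μs i)] (n : ℕ) : SFinite (partialConv μs n) := by
  induction n with
  | zero => exact inferInstanceAs (SFinite (Measure.dirac 0))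
  | succ n _ => exact inferInstanceAs (SFinite ((partialConv μs n).conv (μs (n + 1))))

lemma ae_nonneg_partialConv [∀ i, SFinite (μs i)] (hμs : ∀ i, ∀ᵐ x ∂μs i, 0 ≤ x) (n : ℕ) :
    ∀ᵐ x ∂partialConv μs n, 0 ≤ x := by
  induction n with
  | zero => exact (ae_dirac_iff measurableSet_Ici).2 le_rfl
  | succ n ih => exact ae_nonneg_conv ih (hμs _)

lemma partialConv_Iic_le_prod [∀ i, SFinite (μs i)] (hμs : ∀ i, ∀ᵐ x ∂μs i, 0 ≤ x)
    (n : ℕ) (t : ℝ) :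
    partialConv μs n (Iic t) ≤ ∏ i ∈ Finset.range n, μs (i + 1) (Iic t) := by
  induction n with
  | zero => exact prob_le_one (μ := Measure.dirac 0)
  | succ n ih =>
    rw [Finset.prod_range_succ]
    exact (conv_Iic_le_mul (ae_nonneg_partialConv hμs n) (hμs _) t).trans (by gcongr)

lemma laplaceTransform_partialConv [∀ i, SFinite (μs i)] (n : ℕ) (s : ℝ) :
    laplaceTransform (partialConv μs n) s =
      ∏ i ∈ Finset.range n, laplaceTransform (μs (i + 1)) s := by
  induction n with
  | zero => simp [partialConv, laplaceTransform]
  | succ n ih => rw [partialConv, laplaceTransform_conv, ih, Finset.prod_range_succ]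

lemma renewalFunction_eq_tsum (μs : ℕ → Measure ℝ) {t : ℝ} (ht : 0 ≤ t) :
    renewalFunction μs t = ∑' n, partialConv μs n (Icc 0 t) := by
  rw [tsum_eq_zero_add' ENNReal.summable, renewalFunction, partialConv,
    Measure.dirac_apply_of_mem (left_mem_Icc.2 ht)]

end Convolution

section Laplace

variable {μ : Measure ℝ} {s t : ℝ}

lemma laplaceTransform_add_le (hμ : ∀ᵐ x ∂μ, 0 ≤ x) {r : ℝ} (hr : 0 ≤ r) (hs : 0 ≤ s) :
    laplaceTransform μ (r + s) ≤
      μ (Icc 0 t) + ENNReal.ofReal (Real.exp (-(r * t))) * laplaceTransform μ s := by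
  calc laplaceTransform μ (r + s)
      ≤ ∫⁻ x, (Icc 0 t).indicator 1 x + ENNReal.ofReal (Real.exp (-(r * t))) *
          ENNReal.ofReal (Real.exp (-(s * x))) ∂μ := by
        refine lintegral_mono_ae ?_
        filter_upwards [hμ] with x hx
        rcases le_or_gt x t with hxt | hxt
        · rw [indicator_of_mem (mem_Icc.2 ⟨hx, hxt⟩)]
          refine le_add_right (ENNReal.ofReal_le_one.2 (Real.exp_le_one_iff.2 ?_))
          exact neg_nonpos.2 (mul_nonneg (add_nonneg hr hs) hx)
        · rw [← ENNReal.ofReal_mul (Real.exp_nonneg _), ← Real.exp_add]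
          refine le_add_left (ENNReal.ofReal_le_ofReal (Real.exp_le_exp.2 ?_))
          linarith [mul_le_mul_of_nonneg_left hxt.le hr]
    _ = μ (Icc 0 t) + ENNReal.ofReal (Real.exp (-(r * t))) * laplaceTransform μ s := by
        rw [lintegral_add_left (by measurability), lintegral_indicator_one measurableSet_Icc,
          lintegral_const_mul _ (by fun_prop), laplaceTransform]

lemma laplaceTransform_add_mul_measure_Ioi_le_one [IsProbabilityMeasure μ]
    (hμ : ∀ᵐ x ∂μ, 0 ≤ x) (hs : 0 ≤ s) (ht : 0 ≤ t) :
    laplaceTransform μ s + ENNReal.ofReal (1 - Real.exp (-(s * t))) * μ (Ioi t) ≤ 1 := by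
  calc laplaceTransform μ s + ENNReal.ofReal (1 - Real.exp (-(s * t))) * μ (Ioi t)
      = ∫⁻ x, ENNReal.ofReal (Real.exp (-(s * x))) +
          (Ioi t).indicator (fun _ => ENNReal.ofReal (1 - Real.exp (-(s * t)))) x ∂μ := by
        rw [lintegral_add_left (by fun_prop), lintegral_indicator_const measurableSet_Ioi,
          laplaceTransform]
    _ ≤ ∫⁻ _, 1 ∂μ := by
        refine lintegral_mono_ae ?_
        filter_upwards [hμ] with x hx
        rcases le_or_gt x t with hxt | hxt
        · rw [indicator_of_notMem (notMem_Ioi.2 hxt), add_zero]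
          exact ENNReal.ofReal_le_one.2
            (Real.exp_le_one_iff.2 (neg_nonpos.2 (mul_nonneg hs hx)))
        · have hexp : Real.exp (-(s * x)) ≤ Real.exp (-(s * t)) :=
            Real.exp_le_exp.2 (neg_le_neg (mul_le_mul_of_nonneg_left hxt.le hs))
          have hexp_le : Real.exp (-(s * t)) ≤ 1 :=
            Real.exp_le_one_iff.2 (neg_nonpos.2 (mul_nonneg hs ht))
          rw [indicator_of_mem (mem_Ioi.2 hxt),
            ← ENNReal.ofReal_add (Real.exp_nonneg _) (sub_nonneg.2 hexp_le)]
          exact ENNReal.ofReal_le_one.2 (by linarith)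
    _ = 1 := by simp

lemma one_le_laplaceTransform_add [IsProbabilityMeasure μ] (hs : 0 ≤ s) (t : ℝ) :
    1 ≤ laplaceTransform μ s +
      (μ (Ioi t) + ENNReal.ofReal s * ∫⁻ x in Iic t, ENNReal.ofReal x ∂μ) := by
  calc (1 : ℝ≥0∞) = ∫⁻ _, 1 ∂μ := by simp
    _ ≤ ∫⁻ x, ENNReal.ofReal (Real.exp (-(s * x))) + ((Ioi t).indicator 1 x +
          ENNReal.ofReal s * (Iic t).indicator (fun x => ENNReal.ofReal x) x) ∂μ := by
        refine lintegral_mono fun x => ?_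
        rcases le_or_gt x t with hxt | hxt
        · rw [indicator_of_notMem (notMem_Ioi.2 hxt), indicator_of_mem (mem_Iic.2 hxt), zero_add,
            ← ENNReal.ofReal_mul hs, ← ENNReal.ofReal_one]
          refine (ENNReal.ofReal_le_ofReal ?_).trans ENNReal.ofReal_add_le
          linarith [Real.add_one_le_exp (-(s * x))]
        · rw [indicator_of_mem (mem_Ioi.2 hxt)]
          exact le_add_left (le_add_right le_rfl)
    _ = laplaceTransform μ s +
          (μ (Ioi t) + ENNReal.ofReal s * ∫⁻ x in Iic t, ENNReal.ofReal x ∂μ) := by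
        have hmeas : Measurable ((Iic t).indicator fun x : ℝ => ENNReal.ofReal x) :=
          ENNReal.measurable_ofReal.indicator measurableSet_Iic
        rw [lintegral_add_left (by fun_prop), lintegral_add_left (by measurability),
          lintegral_indicator_one measurableSet_Ioi, lintegral_const_mul _ hmeas,
          lintegral_indicator measurableSet_Iic, laplaceTransform]

lemma laplaceTransform_add_ofReal_le_one [IsProbabilityMeasure μ] (hμ : ∀ᵐ x ∂μ, 0 ≤ x)
    (hs : 0 ≤ s) (ht : 0 ≤ t) {l : ℝ} (hl : l ≤ μ.real (Ioi t)) :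
    laplaceTransform μ s + ENNReal.ofReal ((1 - Real.exp (-(s * t))) * l) ≤ 1 := by
  have hexp : 0 ≤ 1 - Real.exp (-(s * t)) :=
    sub_nonneg.2 (Real.exp_le_one_iff.2 (neg_nonpos.2 (mul_nonneg hs ht)))
  refine le_trans ?_ (laplaceTransform_add_mul_measure_Ioi_le_one hμ hs ht)
  rw [ENNReal.ofReal_mul hexp, ← ofReal_measureReal (s := Ioi t)]
  gcongr

lemma one_le_laplaceTransform_add_ofReal [IsProbabilityMeasure μ] (hs : 0 ≤ s) {m h : ℝ}
    (hm : 0 ≤ m) (hh : μ.real (Ioi t) ≤ h)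
    (hmoment : ∫⁻ x in Iic t, ENNReal.ofReal x ∂μ ≤ ENNReal.ofReal (m * μ.real (Ioi t))) :
    1 ≤ laplaceTransform μ s + ENNReal.ofReal ((1 + s * m) * h) := by
  have hh_nonneg : 0 ≤ h := measureReal_nonneg.trans hh
  refine (one_le_laplaceTransform_add (μ := μ) hs t).trans ?_
  gcongr
  calc μ (Ioi t) + ENNReal.ofReal s * ∫⁻ x in Iic t, ENNReal.ofReal x ∂μ
      ≤ ENNReal.ofReal h + ENNReal.ofReal s * ENNReal.ofReal (m * h) := by
        rw [← ofReal_measureReal (s := Ioi t)]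
        gcongr
        exact hmoment.trans (by gcongr)
    _ = ENNReal.ofReal ((1 + s * m) * h) := by
        rw [← ENNReal.ofReal_mul hs, ← ENNReal.ofReal_add hh_nonneg (by positivity)]
        ring_nf

end Laplace

section RenewalBounds

variable {μs : ℕ → Measure ℝ} {t : ℝ} {δ : ℝ≥0∞}

lemma tsum_prod_le_inv {f : ℕ → ℝ≥0∞} (hδ : δ ≤ 1) (hf : ∀ i, f i ≤ 1 - δ) :
    ∑' n, ∏ i ∈ Finset.range n, f i ≤ δ⁻¹ := by
  calc ∑' n, ∏ i ∈ Finset.range n, f i ≤ ∑' n, (1 - δ) ^ n := by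
        refine ENNReal.tsum_le_tsum fun n => ?_
        simpa using Finset.prod_le_pow_card (Finset.range n) f _ fun i _ => hf i
    _ = δ⁻¹ := by rw [ENNReal.tsum_geometric, ENNReal.sub_sub_cancel one_ne_top hδ]

lemma inv_le_tsum_prod {f : ℕ → ℝ≥0∞} {η : ℝ≥0∞} (hf : ∀ i, 1 ≤ f i + η) :
    η⁻¹ ≤ ∑' n, ∏ i ∈ Finset.range n, f i := by
  calc η⁻¹ ≤ (1 - (1 - η))⁻¹ := ENNReal.inv_le_inv.2 tsub_tsub_le
    _ = ∑' n, (1 - η) ^ n := (ENNReal.tsum_geometric _).symm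
    _ ≤ ∑' n, ∏ i ∈ Finset.range n, f i := by
        refine ENNReal.tsum_le_tsum fun n => ?_
        simpa using Finset.pow_card_le_prod (Finset.range n) f _
          fun i _ => tsub_le_iff_right.2 (hf i)

lemma renewalFunction_le_inv [∀ i, IsProbabilityMeasure (μs i)]
    (hμs : ∀ i, ∀ᵐ x ∂μs i, 0 ≤ x) (hδ : ∀ i, δ ≤ μs i (Ioi t)) :
    renewalFunction μs t ≤ δ⁻¹ := by
  have hIic (i : ℕ) : μs (i + 1) (Iic t) ≤ 1 - δ := by
    rw [← compl_Ioi, prob_compl_eq_one_sub measurableSet_Ioi]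
    exact tsub_le_tsub_left (hδ _) 1
  calc renewalFunction μs t
      ≤ ∑' n, ∏ i ∈ Finset.range n, μs (i + 1) (Iic t) := by
        rw [tsum_eq_zero_add' ENNReal.summable, renewalFunction, Finset.prod_range_zero]
        gcongr with n
        exact (measure_mono Icc_subset_Iic_self).trans (partialConv_Iic_le_prod hμs _ t)
    _ ≤ δ⁻¹ := tsum_prod_le_inv ((hδ 0).trans prob_le_one) hIic

lemma renewalFunction_le_ofReal_inv [∀ i, IsProbabilityMeasure (μs i)]
    (hμs : ∀ i, ∀ᵐ x ∂μs i, 0 ≤ x) {l : ℝ} (hl : 0 < l) (hlt : ∀ i, l ≤ (μs i).real (Ioi t)) :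
    renewalFunction μs t ≤ ENNReal.ofReal l⁻¹ := by
  rw [ENNReal.ofReal_inv_of_pos hl]
  exact renewalFunction_le_inv hμs fun i =>
    (ENNReal.ofReal_le_iff_le_toReal (measure_ne_top _ _)).2 (hlt i)

lemma inv_le_renewalFunction_add [∀ i, SFinite (μs i)] (hμs : ∀ i, ∀ᵐ x ∂μs i, 0 ≤ x)
    (ht : 0 ≤ t) {η : ℝ≥0∞} {r s : ℝ} (hr : 0 ≤ r) (hs : 0 ≤ s)
    (hη : ∀ i, 1 ≤ laplaceTransform (μs i) (r + s) + η)
    (hδ : ∀ i, laplaceTransform (μs i) s + δ ≤ 1) :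
    η⁻¹ ≤ renewalFunction μs t + ENNReal.ofReal (Real.exp (-(r * t))) * δ⁻¹ := by
  calc η⁻¹ ≤ ∑' n, laplaceTransform (partialConv μs n) (r + s) := by
        simp only [laplaceTransform_partialConv]
        exact inv_le_tsum_prod fun i => hη _
    _ ≤ ∑' n, (partialConv μs n (Icc 0 t) +
          ENNReal.ofReal (Real.exp (-(r * t))) * laplaceTransform (partialConv μs n) s) :=
        ENNReal.tsum_le_tsum fun n => laplaceTransform_add_le (ae_nonneg_partialConv hμs n) hr hs
    _ = renewalFunction μs t + ENNReal.ofReal (Real.exp (-(r * t))) *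
          ∑' n, ∏ i ∈ Finset.range n, laplaceTransform (μs (i + 1)) s := by
        simp only [laplaceTransform_partialConv]
        rw [ENNReal.tsum_add, ENNReal.tsum_mul_left, renewalFunction_eq_tsum μs ht]
    _ ≤ renewalFunction μs t + ENNReal.ofReal (Real.exp (-(r * t))) * δ⁻¹ := by
        gcongr
        refine tsum_prod_le_inv (le_of_add_le_right (hδ 0)) fun i => ?_
        exact ENNReal.le_sub_of_add_le_right
          (ne_top_of_le_ne_top one_ne_top (le_of_add_le_right (hδ 0))) (hδ _)

lemma inv_sub_inv_le_toReal_renewalFunction [∀ i, IsProbabilityMeasure (μs i)]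
    (hμs : ∀ i, ∀ᵐ x ∂μs i, 0 ≤ x) (ht : 0 < t) {K u m l h : ℝ} (hK : 0 < K) (hm : 0 ≤ m)
    (hl : 0 < l) (hlt : ∀ i, l ≤ (μs i).real (Ioi t))
    (hh : 0 < h) (huh : ∀ i, (μs i).real (Ioi u) ≤ h)
    (hmoment : ∀ i, ∫⁻ x in Iic u, ENNReal.ofReal x ∂μs i ≤
      ENNReal.ofReal (m * (μs i).real (Ioi u))) :
    ((1 + 2 * K / t * m) * h)⁻¹ - ((Real.exp K - 1) * l)⁻¹ ≤
      (renewalFunction μs t).toReal := by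
  have hs : 0 < K / t := div_pos hK ht
  have hexp : 0 < 1 - Real.exp (-K) := sub_pos.2 (Real.exp_lt_one_iff.2 (neg_neg_of_pos hK))
  have hKt : K / t * t = K := div_mul_cancel₀ K ht.ne'
  have hU : renewalFunction μs t ≠ ⊤ :=
    ne_top_of_le_ne_top ofReal_ne_top (renewalFunction_le_ofReal_inv hμs hl hlt)
  have hle := inv_le_renewalFunction_add hμs ht.le hs.le hs.le
    (fun i => one_le_laplaceTransform_add_ofReal (add_nonneg hs.le hs.le) hm (huh i) (hmoment i))
    (fun i => laplaceTransform_add_ofReal_le_one (hμs i) hs.le ht.le (hlt i))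
  rw [hKt, ← ENNReal.ofReal_toReal hU, ← ENNReal.ofReal_inv_of_pos (by positivity),
    ← ENNReal.ofReal_inv_of_pos (by positivity), ← ENNReal.ofReal_mul (by positivity),
    ← ENNReal.ofReal_add toReal_nonneg (by positivity),
    ENNReal.ofReal_le_ofReal_iff (by positivity)] at hle
  have hexp_mul : Real.exp (-K) * ((1 - Real.exp (-K)) * l)⁻¹ = ((Real.exp K - 1) * l)⁻¹ := by
    rw [Real.exp_neg]
    field_simp
  rw [← hexp_mul, tsub_le_iff_right, show 2 * K / t = K / t + K / t by ring]
  exact hle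

end RenewalBounds

section TruncatedMoment

theorem dyadic_induction {p : ℝ → Prop} {t₀ : ℝ} (ht₀ : 0 < t₀)
    (base : ∀ t ∈ Icc t₀ (2 * t₀), p t) (step : ∀ t, t₀ ≤ t → p t → p (2 * t))
    {t : ℝ} (ht : t₀ ≤ t) : p t := by
  have bounded (n : ℕ) : ∀ t, t₀ ≤ t → t ≤ 2 ^ n * (2 * t₀) → p t := by
    induction n with
    | zero => exact fun t ht ht' => base t ⟨ht, by simpa using ht'⟩
    | succ n ih =>
      intro t ht ht'
      rcases le_or_gt t (2 * t₀) with h | h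
      · exact base t ⟨ht, h⟩
      · have hhalf := step (t / 2) (by linarith) (ih (t / 2) (by linarith) (by
          rw [pow_succ] at ht'; linarith))
        rwa [mul_div_cancel₀ t two_ne_zero] at hhalf
  obtain ⟨n, hn⟩ := pow_unbounded_of_one_lt (t / (2 * t₀)) (one_lt_two (α := ℝ))
  exact bounded n t ht ((div_le_iff₀ (by positivity)).1 hn.le)

variable {μ : Measure ℝ}

lemma setLIntegral_ofReal_le_mul {s : Set ℝ} {b : ℝ} (hs : ∀ x ∈ s, x ≤ b) :
    ∫⁻ x in s, ENNReal.ofReal x ∂μ ≤ ENNReal.ofReal b * μ s := by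
  rw [← setLIntegral_const]
  exact setLIntegral_mono measurable_const fun x hx => ENNReal.ofReal_le_ofReal (hs x hx)

lemma setLIntegral_Iic_two_mul_le [IsFiniteMeasure μ] {t : ℝ} (ht : 0 ≤ t) :
    ∫⁻ x in Iic (2 * t), ENNReal.ofReal x ∂μ ≤
      ∫⁻ x in Iic t, ENNReal.ofReal x ∂μ + ENNReal.ofReal (2 * t * μ.real (Ioi t)) := by
  rw [← Iic_union_Ioc_eq_Iic (show t ≤ 2 * t by linarith)]
  refine (lintegral_union_le _ _ _).trans ?_
  gcongr
  rw [ENNReal.ofReal_mul (by positivity), ofReal_measureReal]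
  refine (setLIntegral_ofReal_le_mul fun x hx => hx.2).trans ?_
  gcongr
  exact Ioc_subset_Ioi_self

/- Doubling `t` turns a bound `C` on the ratio of the truncated moment to `t * μ.real (Ioi t)` into
`(2 / 3) * (C + 2)`, which is at most `C` exactly when `4 ≤ C`. -/
lemma setLIntegral_Iic_le_of_doubling [IsProbabilityMeasure μ] {C t₀ : ℝ} (ht₀ : 0 < t₀)
    (hC : 4 ≤ C) (htail : 1 ≤ C * μ.real (Ioi (2 * t₀)))
    (hdouble : ∀ t, t₀ ≤ t → 3 * μ.real (Ioi t) ≤ 4 * μ.real (Ioi (2 * t)))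
    {t : ℝ} (ht : t₀ ≤ t) :
    ∫⁻ x in Iic t, ENNReal.ofReal x ∂μ ≤ ENNReal.ofReal (C * t * μ.real (Ioi t)) := by
  refine dyadic_induction (p := fun t => ∫⁻ x in Iic t, ENNReal.ofReal x ∂μ ≤
    ENNReal.ofReal (C * t * μ.real (Ioi t))) ht₀ (fun t ht => ?_) (fun t ht ih => ?_) ht
  · have ht' : 0 < t := ht₀.trans_le ht.1
    have hmono : μ.real (Ioi (2 * t₀)) ≤ μ.real (Ioi t) :=
      measureReal_mono (Ioi_subset_Ioi ht.2)
    calc ∫⁻ x in Iic t, ENNReal.ofReal x ∂μ ≤ ENNReal.ofReal t * μ (Iic t) :=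
          setLIntegral_ofReal_le_mul fun x hx => hx
      _ ≤ ENNReal.ofReal t := mul_le_of_le_one_right' prob_le_one
      _ ≤ ENNReal.ofReal (C * t * μ.real (Ioi t)) := by
          refine ENNReal.ofReal_le_ofReal ?_
          have : 1 ≤ C * μ.real (Ioi t) := htail.trans (by gcongr)
          nlinarith
  · have ht' : 0 < t := ht₀.trans_le ht
    calc ∫⁻ x in Iic (2 * t), ENNReal.ofReal x ∂μ
        ≤ ENNReal.ofReal (C * t * μ.real (Ioi t)) + ENNReal.ofReal (2 * t * μ.real (Ioi t)) :=
          (setLIntegral_Iic_two_mul_le ht'.le).trans (by gcongr)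
      _ = ENNReal.ofReal ((C + 2) / 3 * t * (3 * μ.real (Ioi t))) := by
          rw [← ENNReal.ofReal_add (by positivity) (by positivity)]
          ring_nf
      _ ≤ ENNReal.ofReal ((C + 2) / 3 * t * (4 * μ.real (Ioi (2 * t)))) := by
          gcongr ENNReal.ofReal (_ * ?_)
          exact hdouble t ht
      _ ≤ ENNReal.ofReal (C * (2 * t) * μ.real (Ioi (2 * t))) := by
          refine ENNReal.ofReal_le_ofReal ?_
          have : 0 ≤ t * μ.real (Ioi (2 * t)) := by positivity
          nlinarith

end TruncatedMoment

section SlowVariation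

open Asymptotics

/-- Slow variation at infinity, for a function which is only required to be positive near
infinity: `L (c * t) / L t → 1` for every `c > 0`, expressed as an asymptotic equivalence. -/
structure IsSlowlyVarying (L : ℝ → ℝ) : Prop where
  eventually_pos : ∀ᶠ t in atTop, 0 < L t
  comp_const_mul : ∀ c, 0 < c → (fun t => L (c * t)) ~[atTop] L

variable {L lo hi : ℝ → ℝ} {μs : ℕ → Measure ℝ}

lemma IsSlowlyVarying.isEquivalent_comp_const_mul {f : ℝ → ℝ} (hL : IsSlowlyVarying L)
    (hf : f ~[atTop] L) {c : ℝ} (hc : 0 < c) :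
    (fun t => f (c * t)) ~[atTop] L :=
  (hf.comp_tendsto (tendsto_id.const_mul_atTop hc)).trans (hL.comp_const_mul c hc)

lemma IsSlowlyVarying.tendsto_inv_comp_const_mul {f : ℝ → ℝ} (hL : IsSlowlyVarying L)
    (hf : f ~[atTop] L) {c : ℝ} (hc : 0 < c) :
    Tendsto (fun t => (f (c * t))⁻¹ * L t) atTop (𝓝 1) := by
  have hratio := (isEquivalent_iff_tendsto_one
    (hL.eventually_pos.mono fun t ht => ht.ne')).1 (hL.isEquivalent_comp_const_mul hf hc)
  have hinv := hratio.inv₀ one_ne_zero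
  rw [inv_one] at hinv
  refine hinv.congr fun t => ?_
  rw [Pi.div_apply, inv_div, div_eq_inv_mul]

lemma exists_eventually_setLIntegral_Iic_le [∀ i, IsProbabilityMeasure (μs i)]
    (hL : IsSlowlyVarying L) (hlo : lo ~[atTop] L) (hhi : hi ~[atTop] L)
    (htail : ∀ᶠ t in atTop, ∀ i, (μs i).real (Ioi t) ∈ Icc (lo t) (hi t)) :
    ∃ C : ℝ, 0 ≤ C ∧ ∀ᶠ t in atTop, ∀ i, ∫⁻ x in Iic t, ENNReal.ofReal x ∂μs i ≤
      ENNReal.ofReal (C * t * (μs i).real (Ioi t)) := by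
  have hlo_pos := hlo.eventually_pos hL.eventually_pos
  have hdouble : ∀ᶠ t in atTop, 3 * hi t ≤ 4 * lo (2 * t) := by
    have hlo_two := hL.isEquivalent_comp_const_mul hlo two_pos
    have hratio := (isEquivalent_iff_tendsto_one
      ((hlo_two.eventually_pos hL.eventually_pos).mono fun t ht => ht.ne')).1
      (hhi.trans hlo_two.symm)
    filter_upwards [hratio.eventually_le_const (show (1 : ℝ) < 4 / 3 by norm_num),
      hlo_two.eventually_pos hL.eventually_pos] with t ht hpos
    rw [Pi.div_apply, div_le_iff₀ hpos] at ht
    linarith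
  obtain ⟨t₀, ht₀⟩ := eventually_atTop.1
    (((htail.and hlo_pos).and hdouble).and (eventually_gt_atTop 0))
  have ht₀_pos : 0 < t₀ := (ht₀ t₀ le_rfl).2
  have h_two : t₀ ≤ 2 * t₀ := by linarith
  have hlo_two_pos : 0 < lo (2 * t₀) := (ht₀ _ h_two).1.1.2
  refine ⟨max 4 (lo (2 * t₀))⁻¹, by positivity, ?_⟩
  filter_upwards [eventually_ge_atTop t₀] with t ht i
  refine setLIntegral_Iic_le_of_doubling ht₀_pos (le_max_left _ _) ?_ (fun u hu => ?_) ht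
  · calc 1 = (lo (2 * t₀))⁻¹ * lo (2 * t₀) := (inv_mul_cancel₀ hlo_two_pos.ne').symm
      _ ≤ max 4 (lo (2 * t₀))⁻¹ * (μs i).real (Ioi (2 * t₀)) := by
          gcongr
          · exact le_max_right _ _
          · exact ((ht₀ _ h_two).1.1.1 i).1
  · have hu_two : t₀ ≤ 2 * u := by linarith
    linarith [((ht₀ u hu).1.1.1 i).2, (ht₀ u hu).1.2, ((ht₀ _ hu_two).1.1.1 i).1]

lemma exists_pos_lt_inv_sub_inv (A : ℝ) {c : ℝ} (hc : c < 1) :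
    ∃ K : ℝ, 0 < K ∧ c < (1 + A * K⁻¹)⁻¹ - (Real.exp K - 1)⁻¹ := by
  have hlim : Tendsto (fun K : ℝ => (1 + A * K⁻¹)⁻¹ - (Real.exp K - 1)⁻¹) atTop
      (𝓝 ((1 + A * 0)⁻¹ - 0)) :=
    (((tendsto_inv_atTop_zero.const_mul _).const_add 1).inv₀ (by simp)).sub
      (tendsto_atTop_add_const_right _ (-1) Real.tendsto_exp_atTop).inv_tendsto_atTop
  exact ((eventually_gt_atTop 0).and (hlim.eventually_const_lt (by simpa using hc))).exists

lemma IsSlowlyVarying.eventually_lt_toReal_renewalFunction_mul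
    [∀ i, IsProbabilityMeasure (μs i)] (hμs : ∀ i, ∀ᵐ x ∂μs i, 0 ≤ x)
    (hL : IsSlowlyVarying L) (hlo : lo ~[atTop] L) (hhi : hi ~[atTop] L)
    (htail : ∀ᶠ t in atTop, ∀ i, (μs i).real (Ioi t) ∈ Icc (lo t) (hi t))
    {c : ℝ} (hc : c < 1) :
    ∀ᶠ t in atTop, c < (renewalFunction μs t).toReal * L t := by
  obtain ⟨C, hC, hmoment⟩ := exists_eventually_setLIntegral_Iic_le hL hlo hhi htail
  -- Truncating at `u = t / K ^ 2` makes the moment error `(2 * K / t) * (C * u) = 2 * C / K`.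
  obtain ⟨K, hK, hK_lt⟩ := exists_pos_lt_inv_sub_inv (2 * C) hc
  have he : 0 < (K ^ 2)⁻¹ := by positivity
  have hmul := tendsto_id.const_mul_atTop (β := ℝ) he
  have hlim : Tendsto (fun t => (1 + 2 * C * K⁻¹)⁻¹ * ((hi ((K ^ 2)⁻¹ * t))⁻¹ * L t) -
      (Real.exp K - 1)⁻¹ * ((lo (1 * t))⁻¹ * L t)) atTop
      (𝓝 ((1 + 2 * C * K⁻¹)⁻¹ * 1 - (Real.exp K - 1)⁻¹ * 1)) :=
    ((hL.tendsto_inv_comp_const_mul hhi he).const_mul _).sub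
      ((hL.tendsto_inv_comp_const_mul hlo one_pos).const_mul _)
  filter_upwards [hlim.eventually_const_lt (by simpa only [mul_one] using hK_lt),
    eventually_gt_atTop 0, hL.eventually_pos, htail, hlo.eventually_pos hL.eventually_pos,
    hmul.eventually htail, hmul.eventually (hhi.eventually_pos hL.eventually_pos),
    hmul.eventually hmoment] with t ht ht_pos hLt htail_t hlo_pos htail_u hhi_pos hmoment_u
  refine ht.trans_le ?_
  have hbound := inv_sub_inv_le_toReal_renewalFunction hμs ht_pos hK
    (mul_nonneg hC (mul_pos he ht_pos).le) hlo_pos (fun i => (htail_t i).1) hhi_pos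
    (fun i => (htail_u i).2) hmoment_u
  have hcoef : 2 * K / t * (C * ((K ^ 2)⁻¹ * t)) = 2 * C * K⁻¹ := by field_simp
  simp only [id] at hbound
  rw [hcoef, mul_inv, mul_inv] at hbound
  rw [one_mul, ← mul_assoc, ← mul_assoc, ← sub_mul]
  gcongr

lemma IsSlowlyVarying.eventually_toReal_renewalFunction_mul_lt
    [∀ i, IsProbabilityMeasure (μs i)] (hμs : ∀ i, ∀ᵐ x ∂μs i, 0 ≤ x)
    (hL : IsSlowlyVarying L) (hlo : lo ~[atTop] L)
    (htail : ∀ᶠ t in atTop, ∀ i, lo t ≤ (μs i).real (Ioi t)) {c : ℝ} (hc : 1 < c) :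
    ∀ᶠ t in atTop, (renewalFunction μs t).toReal * L t < c := by
  filter_upwards [(hL.tendsto_inv_comp_const_mul hlo one_pos).eventually_lt_const hc,
    hL.eventually_pos, hlo.eventually_pos hL.eventually_pos, htail] with t ht hLt hlo_pos htail_t
  refine lt_of_le_of_lt ?_ ht
  rw [one_mul]
  gcongr
  refine ENNReal.toReal_le_of_le_ofReal (by positivity) ?_
  exact renewalFunction_le_ofReal_inv hμs hlo_pos htail_t

theorem scaled_renewal_function_slowly_varying_general (hL : IsSlowlyVarying L)
    (hlo : lo ~[atTop] L) (hhi : hi ~[atTop] L)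
    (μs : ℕ → Measure ℝ) [∀ i, IsProbabilityMeasure (μs i)] (hμs : ∀ i, ∀ᵐ x ∂μs i, 0 ≤ x)
    (htail : ∀ᶠ t in atTop, ∀ i, (μs i).real (Ioi t) ∈ Icc (lo t) (hi t)) :
    (∀ t, renewalFunction μs t < ⊤) ∧
      Tendsto (fun t => (renewalFunction μs t).toReal * L t) atTop (𝓝 1) := by
  have htail_lo : ∀ᶠ t in atTop, ∀ i, lo t ≤ (μs i).real (Ioi t) :=
    htail.mono fun t ht i => (ht i).1
  refine ⟨fun t => ?_, tendsto_order.2 ⟨fun c hc => ?_, fun c hc => ?_⟩⟩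
  · obtain ⟨u, ⟨hu, hlo_pos⟩, htu⟩ := ((htail_lo.and
      (hlo.eventually_pos hL.eventually_pos)).and (eventually_ge_atTop t)).exists
    exact (renewalFunction_le_ofReal_inv hμs hlo_pos fun i =>
      (hu i).trans (measureReal_mono (Ioi_subset_Ioi htu))).trans_lt ofReal_lt_top
  · exact hL.eventually_lt_toReal_renewalFunction_mul hμs hlo hhi htail hc
  · exact hL.eventually_toReal_renewalFunction_mul_lt hμs hlo htail_lo hc

end SlowVariation

section Scaling

variable {μ : Measure ℝ}

lemma one_sub_measureReal_Ioc [IsProbabilityMeasure μ] {c : ℝ} (hμ : μ (Iic c) = 0) (t : ℝ) :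
    1 - μ.real (Ioc c t) = μ.real (Ioi t) := by
  have hIoc : μ.real (Ioc c t) = μ.real (Iic t) := by
    have hdiff : Ioc c t = Iic t \ Iic c := by
      rw [sdiff_eq, compl_Iic, inter_comm, Ioi_inter_Iic]
    rw [hdiff, measureReal_def, measureReal_def, measure_sdiff_null hμ]
  rw [hIoc, ← probReal_compl_eq_one_sub measurableSet_Iic, compl_Iic]

lemma ae_nonneg_map_div (hμ : ∀ᵐ x ∂μ, 0 ≤ x) {c : ℝ} (hc : 0 ≤ c) :
    ∀ᵐ x ∂(μ.map fun x => x / c), 0 ≤ x :=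
  (ae_map_iff (by fun_prop) measurableSet_Ici).2 (hμ.mono fun _ hx => div_nonneg hx hc)

lemma measureReal_map_div_Ioi {c : ℝ} (hc : 0 < c) (t : ℝ) :
    (μ.map fun x => x / c).real (Ioi t) = μ.real (Ioi (c * t)) := by
  rw [map_measureReal_apply (by fun_prop) measurableSet_Ioi]
  congr 1
  ext x
  rw [mem_preimage, mem_Ioi, mem_Ioi, lt_div_iff₀' hc]

lemma measureReal_map_div_Ioi_mem_Icc [IsFiniteMeasure μ] {a b c t : ℝ} (ha : 0 < a)
    (hc : c ∈ Icc a b) (ht : 0 ≤ t) :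
    (μ.map fun x => x / c).real (Ioi t) ∈ Icc (μ.real (Ioi (b * t))) (μ.real (Ioi (a * t))) := by
  rw [measureReal_map_div_Ioi (ha.trans_le hc.1)]
  exact ⟨measureReal_mono (Ioi_subset_Ioi (mul_le_mul_of_nonneg_right hc.2 ht)),
    measureReal_mono (Ioi_subset_Ioi (mul_le_mul_of_nonneg_right hc.1 ht))⟩

theorem renewalFunction_map_div_of_isSlowlyVarying [IsProbabilityMeasure μ]
    (hμ : ∀ᵐ x ∂μ, 0 ≤ x) (hslow : IsSlowlyVarying fun t => μ.real (Ioi t)) {a b : ℝ} (ha : 0 < a)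
    {lam : ℕ → ℝ} (hlam : ∀ i, lam i ∈ Icc a b) :
    (∀ t, renewalFunction (fun i => μ.map fun x => x / lam i) t < ⊤) ∧
      Tendsto (fun t => (renewalFunction (fun i => μ.map fun x => x / lam i) t).toReal *
        μ.real (Ioi t)) atTop (𝓝 1) := by
  have hb : 0 < b := ha.trans_le ((hlam 0).1.trans (hlam 0).2)
  have (i : ℕ) : IsProbabilityMeasure (μ.map fun x => x / lam i) :=
    Measure.isProbabilityMeasure_map (by fun_prop)
  refine scaled_renewal_function_slowly_varying_general hslow
    (hslow.comp_const_mul b hb) (hslow.comp_const_mul a ha) _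
    (fun i => ae_nonneg_map_div hμ (ha.le.trans (hlam i).1)) ?_
  filter_upwards [eventually_ge_atTop 0] with t ht i
  exact measureReal_map_div_Ioi_mem_Icc ha (hlam i) ht

end Scaling

/-- **Scaled renewal function for slowly varying tails.** If `μ` is a
probability measure on `(0,∞)` with positive slowly varying upper tail
`1 - F`, `(λ_i)` is any sequence in `[a,b] ⊆ (0,∞)` and `μ_i` is the
pushforward of `μ` under `x ↦ x/λ_i`, then
`U_Λ(t) = 1 + Σ_{n≥1} (μ_1 * ⋯ * μ_n)([0,t])` is finite and
`U_Λ(t)·(1 - F(t)) → 1` as `t → ∞`. -/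
theorem scaled_renewal_function_slowly_varying
    (μ : Measure ℝ) [IsProbabilityMeasure μ]
    (hsupp : μ (Set.Iic (0 : ℝ)) = 0)
    (F : ℝ → ℝ) (hF : ∀ t, F t = (μ (Set.Ioc (0 : ℝ) t)).toReal)
    (hFtail : ∀ t : ℝ, 0 < 1 - F t)
    (hFslow : ∀ c : ℝ, 0 < c →
      Tendsto (fun t : ℝ => (1 - F (c * t)) / (1 - F t)) atTop (𝓝 1))
    (a b : ℝ) (ha : 0 < a) (hab : a < b)
    (lam : ℕ → ℝ) (hlam : ∀ i, lam i ∈ Set.Icc a b)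
    (μs : ℕ → Measure ℝ)
    (hμs : ∀ i, μs i = Measure.map (fun x : ℝ => x / lam i) μ)
    (U : ℝ → ℝ≥0∞)
    (hU : ∀ t, U t = 1 + ∑' n : ℕ, partialConv μs (n + 1) (Set.Icc 0 t)) :
    (∀ t : ℝ, U t < ⊤) ∧
      Tendsto (fun t : ℝ => (U t).toReal * (1 - F t)) atTop (𝓝 1) := by
  have hL (t : ℝ) : 1 - F t = μ.real (Ioi t) := by
    rw [hF]
    exact one_sub_measureReal_Ioc hsupp t
  simp only [hL] at hFtail hFslow ⊢
  have hnonneg : ∀ᵐ x ∂μ, 0 ≤ x :=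
    (measure_eq_zero_iff_ae_notMem.1 hsupp).mono fun x hx => (not_le.1 hx).le
  obtain rfl : U = renewalFunction μs := funext hU
  obtain rfl : μs = fun i => μ.map fun x => x / lam i := funext hμs
  exact renewalFunction_map_div_of_isSlowlyVarying hnonneg
    ⟨.of_forall hFtail, fun c hc => Asymptotics.isEquivalent_of_tendsto_one (hFslow c hc)⟩ ha hlam
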